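/- Let d ≥ 3 and ε ∈ (0,1), and let B = B(0,N^{1−ε/2}) ⊂ T. There is a constant c = c(d,ε) > 0 such that for all sufficiently large N: inf_{x ∈ T∖B} σ(x) ≥ c N^{−2d}, where σ is the quasistationary distribution on T∖B. -/

import Mathlib

open MeasureTheory Filter Classical
open scoped ENNReal NNReal

noncomputable section

namespace Frag

/-! ### Graph-theoretic basics -/

/-- Two vertices of `Fin d → R` are adjacent if they differ in exactly one
coordinate, by `±1` (Euclidean distance one). -/
def adj {d : ℕ} {R : Type*} [AddGroupWithOne R] (x y : Fin d → R) : Prop :=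
  x ≠ y ∧ ∃ i : Fin d, (y i = x i + 1 ∨ x i = y i + 1) ∧ ∀ j : Fin d, j ≠ i → x j = y j

/-- The discrete torus `(ℤ/Nℤ)^d`. -/
abbrev Torus (d N : ℕ) := Fin d → ZMod N

/-- The lattice `ℤ^d`. -/
abbrev Lat (d : ℕ) := Fin d → ℤ

instance (n : ℕ) : MeasurableSpace (ZMod n) := ⊤

/-- The `ℓ∞`-distance on the torus. -/
def torusDist {d N : ℕ} (x y : Torus d N) : ℕ :=
  Finset.univ.sup fun i : Fin d => min (x i - y i).val (y i - x i).val

/-- The `ℓ∞`-distance on the lattice. -/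
def latDist {d : ℕ} (x y : Lat d) : ℕ :=
  Finset.univ.sup fun i : Fin d => (x i - y i).natAbs

/-- Closed `ℓ∞`-ball in the torus. -/
def torusBall {d N : ℕ} (x : Torus d N) (r : ℝ) : Set (Torus d N) :=
  {y | (torusDist x y : ℝ) ≤ r}

/-- Closed `ℓ∞`-ball in the lattice. -/
def latBall {d : ℕ} (x : Lat d) (r : ℝ) : Set (Lat d) :=
  {y | (latDist x y : ℝ) ≤ r}

/-- `x` and `y` are connected by a nearest-neighbour path staying in `S`. -/
def connectedIn {α : Type*} (rel : α → α → Prop) (S : Set α) (x y : α) : Prop :=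
  ∃ (n : ℕ) (p : ℕ → α), p 0 = x ∧ p n = y ∧ (∀ k, k ≤ n → p k ∈ S) ∧
    ∀ k, k < n → rel (p k) (p (k + 1))

/-- The connected component of `x` inside `S`. -/
def compOf {α : Type*} (rel : α → α → Prop) (S : Set α) (x : α) : Set α :=
  {y | connectedIn rel S x y}

/-- `S` is a connected set. -/
def IsConnSet {α : Type*} (rel : α → α → Prop) (S : Set α) : Prop :=
  ∀ x ∈ S, ∀ y ∈ S, connectedIn rel S x y

/-- External vertex boundary. -/
def extBdry {α : Type*} (rel : α → α → Prop) (S : Set α) : Set α :=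
  {y | y ∉ S ∧ ∃ x ∈ S, rel x y}

/-- Internal vertex boundary. -/
def intBdry {α : Type*} (rel : α → α → Prop) (S : Set α) : Set α :=
  {x | x ∈ S ∧ ∃ y, y ∉ S ∧ rel x y}

/-- The cardinality of the largest connected component of `S`. -/
def maxCompSize {α : Type*} (rel : α → α → Prop) (S : Set α) : ℕ :=
  sSup {n | ∃ x ∈ S, n = (compOf rel S x).ncard}

/-- The diameter of a set with respect to a distance. -/
def diamOf {α : Type*} (dist : α → α → ℕ) (S : Set α) : ℕ :=
  sSup {n | ∃ x ∈ S, ∃ y ∈ S, n = dist x y}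

/-- The canonical graph isomorphism `φ` from `B(0, N/4) ⊆ (ℤ/Nℤ)^d` onto
`B(0, N/4) ⊆ ℤ^d`, given by the signed representative of each coordinate. -/
def torusToLat {d N : ℕ} (x : Torus d N) : Lat d :=
  fun i => if ((x i).val : ℝ) ≤ (N : ℝ) / 2 then ((x i).val : ℤ) else ((x i).val : ℤ) - (N : ℤ)

/-! ### Discrete-time simple random walk -/

/-- One-step transition probability of the simple random walk. -/
def srwStep {d : ℕ} {R : Type*} [AddGroupWithOne R] (x y : Fin d → R) : ℝ≥0∞ :=
  if adj x y then ((2 * d : ℕ) : ℝ≥0∞)⁻¹ else 0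

/-- `μ` is the law on path space of the discrete-time simple random walk with
initial distribution `init`, characterized by its cylinder probabilities. -/
def IsWalkLaw {d : ℕ} {R : Type*} [AddGroupWithOne R] [MeasurableSpace R]
    (μ : Measure (ℕ → (Fin d → R))) (init : (Fin d → R) → ℝ≥0∞) : Prop :=
  IsProbabilityMeasure μ ∧
  ∀ (n : ℕ) (w : ℕ → (Fin d → R)),
    μ {ω | ∀ k, k ≤ n → ω k = w k} =
      init (w 0) * ∏ k ∈ Finset.range n, srwStep (w k) (w (k + 1))

/-- The uniform initial distribution on the torus. -/
def unifInit (d N : ℕ) : Torus d N → ℝ≥0∞ := fun _ => ((N : ℝ≥0∞) ^ d)⁻¹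

/-- The initial distribution concentrated at `x`. -/
def pointInit {α : Type*} (x : α) : α → ℝ≥0∞ := fun y => if y = x then 1 else 0

/-- The set of sites visited in the first `t` steps. -/
def visited {α : Type*} (t : ℕ) (ω : ℕ → α) : Set α := {v | ∃ k, k ≤ t ∧ ω k = v}

/-! ### Capacity and random interlacements on `ℤ^d` -/

/-- The event that the walk never returns to `V` after time `0`. -/
def escEvent {d : ℕ} (V : Set (Lat d)) : Set (ℕ → Lat d) :=
  {w | ∀ n, 1 ≤ n → w n ∉ V}

/-- `r` is the (simple random walk) capacity of `V ⊆ ℤ^d`: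
`r = Σ_{x ∈ V} P_x[H̃_V = ∞]`. -/
def IsCap (d : ℕ) (V : Set (Lat d)) (r : ℝ) : Prop :=
  ∃ μ : Lat d → Measure (ℕ → Lat d),
    (∀ x, IsWalkLaw (μ x) (pointInit x)) ∧
    r = ∑ᶠ x ∈ V, ((μ x) (escEvent V)).toReal

/-- `I` is a random interlacement at level `u` on the probability space `(Ω, P)`:
for every finite `V ⊆ ℤ^d`, `P[I ∩ V = ∅] = exp (−u · cap V)`. -/
def IsInterlacement (d : ℕ) (u : ℝ) {Ω : Type*} [MeasurableSpace Ω]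
    (P : Measure Ω) (I : Ω → Set (Lat d)) : Prop :=
  IsProbabilityMeasure P ∧
  (∀ x : Lat d, MeasurableSet {ω | x ∈ I ω}) ∧
  ∀ V : Set (Lat d), V.Finite → ∀ r : ℝ, IsCap d V r →
    P {ω | ∀ x ∈ V, x ∉ I ω} = ENNReal.ofReal (Real.exp (-u * r))

/-- `e = η(u)`, the probability that the origin lies in an infinite component of
the vacant set `V^u = ℤ^d ∖ I^u` of a random interlacement at level `u`. -/
def IsEta (d : ℕ) (u e : ℝ) : Prop :=
  ∃ (Ω : Type) (_ : MeasurableSpace Ω) (P : Measure Ω) (I : Ω → Set (Lat d)),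
    IsInterlacement d u P I ∧
    e = (P {ω | (compOf adj ((I ω)ᶜ) (0 : Lat d)).Infinite}).toReal

/-- The critical level `u_* = inf {u ≥ 0 : η(u) = 0}`. -/
def uStar (d : ℕ) : ℝ := sInf {u | 0 ≤ u ∧ IsEta d u 0}

/-- The probability of an event `E` about a random interlacement at level `u`. -/
def intProb (d : ℕ) (u : ℝ) (E : Set (Lat d) → Prop) : ℝ :=
  sSup {p | ∃ (Ω : Type) (_ : MeasurableSpace Ω) (P : Measure Ω) (I : Ω → Set (Lat d)),
    IsInterlacement d u P I ∧ p = (P {ω | E (I ω)}).toReal}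

/-- The event that `B(0,L)` is connected to the external boundary of `B(0,2L)`
by a nearest-neighbour path in `S`. -/
def connAcross (d L : ℕ) (S : Set (Lat d)) : Prop :=
  ∃ x ∈ latBall (0 : Lat d) (L : ℝ), ∃ y ∈ extBdry adj (latBall (0 : Lat d) (2 * (L : ℝ))),
    connectedIn adj S x y

/-- The critical level `u_** = inf {u ≥ 0 : α(u) > 0}`. -/
def uStarStar (d : ℕ) : ℝ :=
  sInf {u | 0 ≤ u ∧ ∃ a : ℝ, 0 < a ∧
    Tendsto (fun L : ℕ => (L : ℝ) ^ a * intProb d u fun I => connAcross d L Iᶜ)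
      atTop (nhds 0)}

/-- `u` is a strongly supercritical level for random interlacements on `ℤ^d`. -/
def StronglySupercritical (d : ℕ) (u : ℝ) : Prop :=
  ∃ μ : ℝ, 0 < μ ∧
  ∃ (Ω : Type) (_ : MeasurableSpace Ω) (P : Measure Ω) (I : ℝ → Ω → Set (Lat d)),
    (∀ v : ℝ, 0 ≤ v → IsInterlacement d v P (I v)) ∧
    (∀ v v' : ℝ, v ≤ v' → ∀ ω, I v ω ⊆ I v' ω) ∧
    ∃ N₀ : ℕ, ∀ N : ℕ, N₀ ≤ N →
      (1 - Real.exp (-(N : ℝ) ^ μ) ≤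
        (P {ω | ∃ x ∈ latBall (0 : Lat d) (N : ℝ),
          (compOf adj ((I (u * (1 + μ)) ω)ᶜ) x).Infinite}).toReal) ∧
      (1 - Real.exp (-(N : ℝ) ^ μ) ≤
        (P {ω | ∀ S₁ S₂ : Set (Lat d),
            S₁ ⊆ (I (u * (1 - μ)) ω)ᶜ ∩ latBall 0 (N : ℝ) →
            S₂ ⊆ (I (u * (1 - μ)) ω)ᶜ ∩ latBall 0 (N : ℝ) →
            IsConnSet adj S₁ → IsConnSet adj S₂ →
            (N : ℝ) / 8 ≤ (diamOf latDist S₁ : ℝ) →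
            (N : ℝ) / 8 ≤ (diamOf latDist S₂ : ℝ) →
            ∃ x ∈ S₁, ∃ y ∈ S₂,
              connectedIn adj ((I (u * (1 + μ)) ω)ᶜ ∩ latBall 0 (2 * (N : ℝ))) x y}).toReal)

/-! ### Continuous-time walk -/

/-- Sample space for the continuous-time walk: a discrete path together with
the i.i.d. exponential interarrival gaps of the driving Poisson process. -/
abbrev CTPath (d N : ℕ) := (ℕ → Torus d N) × (ℕ → ℝ)

/-- The number of jumps performed up to time `t`. -/
def nJumps (g : ℕ → ℝ) (t : ℝ) : ℕ := sSup {n | ∑ k ∈ Finset.range n, g k ≤ t}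

/-- The position of the continuous-time walk at time `t`. -/
def ctPos {d N : ℕ} (ω : CTPath d N) (t : ℝ) : Torus d N := ω.1 (nJumps ω.2 t)

/-- `ν` is the law of an i.i.d. sequence of exponential random variables of
parameter `1`, characterized by its joint survival function. -/
def IsIIDExp (ν : Measure (ℕ → ℝ)) : Prop :=
  IsProbabilityMeasure ν ∧
  ∀ (n : ℕ) (s : ℕ → ℝ), (∀ k, 0 ≤ s k) →
    ν {g | ∀ k, k ≤ n → s k < g k} =
      ENNReal.ofReal (Real.exp (-(∑ k ∈ Finset.range (n + 1), s k)))

/-- `P` is the law of the continuous-time simple random walk `Y_t = X_{N_t}`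
with initial distribution `init`. -/
def IsCTWalk {d N : ℕ} (P : Measure (CTPath d N)) (init : Torus d N → ℝ≥0∞) : Prop :=
  ∃ (μ : Measure (ℕ → Torus d N)) (ν : Measure (ℕ → ℝ)),
    IsWalkLaw μ init ∧ IsIIDExp ν ∧ P = μ.prod ν

/-- The entrance time `H_V = inf {t ≥ 0 : Y_t ∈ V}`. -/
def hitT {d N : ℕ} (V : Set (Torus d N)) (ω : CTPath d N) : ℝ :=
  sInf {t | 0 ≤ t ∧ ctPos ω t ∈ V}

/-- The entrance time to `V` after time `s`. -/
def hitTAfter {d N : ℕ} (V : Set (Torus d N)) (ω : CTPath d N) (s : ℝ) : ℝ :=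
  sInf {t | s ≤ t ∧ ctPos ω t ∈ V}

/-- The exit time `T_V = inf {t ≥ 0 : Y_t ∉ V}`. -/
def exitT {d N : ℕ} (V : Set (Torus d N)) (ω : CTPath d N) : ℝ :=
  sInf {t | 0 ≤ t ∧ ctPos ω t ∉ V}

/-- The regeneration time `t_* = (N log N)^2`. -/
def tstar (N : ℕ) : ℝ := ((N : ℝ) * Real.log N) ^ 2

/-- The first time `t ≥ s + t_*` such that the walk has avoided `B` during the
whole interval `[t − t_*, t]`. -/
def uEndAfter {d N : ℕ} (B : Set (Torus d N)) (ω : CTPath d N) (s : ℝ) : ℝ :=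
  sInf {t | s + tstar N ≤ t ∧ ∀ r, t - tstar N ≤ r → r ≤ t → ctPos ω r ∉ B}

/-- The successive excursion times `(R_k, U_k)` between `A` and (long absences
from) `B`, with the convention `(R_0, U_0) = (0, 0)`. -/
def excTimes {d N : ℕ} (A B : Set (Torus d N)) (ω : CTPath d N) : ℕ → ℝ × ℝ
  | 0 => (0, 0)
  | k + 1 =>
      let R := hitTAfter A ω (excTimes A B ω k).2
      (R, uEndAfter B ω R)

/-- The range of the continuous-time walk during the time interval `[a, b]`. -/
def ctRange {d N : ℕ} (ω : CTPath d N) (a b : ℝ) : Set (Torus d N) :=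
  {v | ∃ t, a ≤ t ∧ t ≤ b ∧ ctPos ω t = v}

/-! ### The killed walk and the quasistationary distribution -/

/-- The action of the substochastic matrix `P^B` (walk killed on `B`) on a
vector `v`. -/
def killedMul (d N : ℕ) (B : Set (Torus d N)) (v : Torus d N → ℝ) (x : Torus d N) : ℝ :=
  ∑ᶠ y : Torus d N, if y ∉ B ∧ adj x y then v y / (2 * d) else 0

/-- `l` is an eigenvalue of the killed transition matrix `P^B`. -/
def IsKilledEigenvalue (d N : ℕ) (B : Set (Torus d N)) (l : ℝ) : Prop :=
  ∃ v : Torus d N → ℝ, v ≠ 0 ∧ (∀ x ∈ B, v x = 0) ∧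
    ∀ x, x ∉ B → killedMul d N B v x = l * v x

/-- `σ` is the quasistationary distribution on `T ∖ B`: the normalized
non-negative principal (Perron–Frobenius) eigenvector of `P^B`. -/
def IsQSD (d N : ℕ) (B : Set (Torus d N)) (σ : Torus d N → ℝ) : Prop :=
  (∀ x, 0 ≤ σ x) ∧ (∀ x ∈ B, σ x = 0) ∧ (∑ᶠ x, σ x = 1) ∧
  ∃ l : ℝ, (∀ x, x ∉ B → killedMul d N B σ x = l * σ x) ∧
    ∀ l', IsKilledEigenvalue d N B l' → l' ≤ l

/-- The Dirichlet form of the simple random walk on the torus. -/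
def dirichlet (d N : ℕ) (g : Torus d N → ℝ) : ℝ :=
  (1 / 2) * ∑ᶠ x : Torus d N, ∑ᶠ y : Torus d N,
    if adj x y then (g x - g y) ^ 2 / (2 * d * (N : ℝ) ^ d) else 0

end Frag

namespace Frag

/-- Sum of a function over the `2d` nearest neighbours of a point. -/
def nbrSum {d : ℕ} {R : Type*} [AddGroupWithOne R] (S : (Fin d → R) → ℝ) (x : Fin d → R) : ℝ :=
  ∑ j, (S (x + Pi.single j 1) + S (x - Pi.single j 1))

theorem comparison_principle {d : ℕ} (hd : 0 < d) {S u : Lat d → ℝ} {A : Set (Lat d)}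
    (hA : A.Finite) (hS : ∀ x ∈ A, nbrSum S x ≤ 2 * d * S x)
    (hu : ∀ x ∈ A, 2 * d * u x ≤ nbrSum u x)
    (hb : ∀ x ∈ A, ∀ j, (x + Pi.single j 1 ∉ A → u (x + Pi.single j 1) ≤ S (x + Pi.single j 1)) ∧
      (x - Pi.single j 1 ∉ A → u (x - Pi.single j 1) ≤ S (x - Pi.single j 1))) :
    ∀ x ∈ A, u x ≤ S x := by
  by_contra! hcon
  obtain ⟨x₀, hx₀, hlt⟩ := hcon
  obtain ⟨y, hyA, hy⟩ := hA.exists_maximalFor (fun x => u x - S x) A ⟨x₀, hx₀⟩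
  have hmax : ∀ x ∈ A, u x - S x ≤ u y - S y := fun x hx => by
    by_contra! h
    exact absurd (hy hx h.le) (not_le.mpr h)
  have hpos : 0 < u y - S y := by have := hmax x₀ hx₀; linarith
  set M := u y - S y with hM
  let A' : Set (Lat d) := {x | x ∈ A ∧ u x - S x = M}
  have hA' : A'.Finite := hA.subset fun x hx => hx.1
  obtain ⟨z, hzA, hz⟩ := hA'.exists_maximalFor (fun x => x ⟨0, hd⟩) A' ⟨y, hyA, rfl⟩
  have hle : ∀ j, u (z + Pi.single j 1) - S (z + Pi.single j 1) ≤ M ∧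
      u (z - Pi.single j 1) - S (z - Pi.single j 1) ≤ M := fun j => by
    constructor
    · by_cases h : z + Pi.single j 1 ∈ A
      · exact hmax _ h
      · have := (hb z hzA.1 j).1 h; linarith
    · by_cases h : z - Pi.single j 1 ∈ A
      · exact hmax _ h
      · have := (hb z hzA.1 j).2 h; linarith
  have hstrict : u (z + Pi.single ⟨0, hd⟩ 1) - S (z + Pi.single ⟨0, hd⟩ 1) < M := by
    refine lt_of_le_of_ne (hle _).1 fun heq => ?_
    by_cases h : z + Pi.single ⟨0, hd⟩ 1 ∈ A
    · have := hz (j := z + Pi.single ⟨0, hd⟩ 1) ⟨h, heq⟩ (by simp)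
      simp at this
    · have := (hb z hzA.1 ⟨0, hd⟩).1 h; linarith
  have hsum : nbrSum u z - nbrSum S z < 2 * d * M := by
    have h1 : nbrSum u z - nbrSum S z =
        ∑ j : Fin d, ((u (z + Pi.single j 1) - S (z + Pi.single j 1)) +
          (u (z - Pi.single j 1) - S (z - Pi.single j 1))) := by
      rw [nbrSum, nbrSum, ← Finset.sum_sub_distrib]
      exact Finset.sum_congr rfl fun j _ => by ring
    have h2 : 2 * d * M = ∑ _j : Fin d, (M + M) := by simp; ring
    rw [h1, h2]
    refine Finset.sum_lt_sum (fun j _ => add_le_add (hle j).1 (hle j).2)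
      ⟨⟨0, hd⟩, Finset.mem_univ _, add_lt_add_of_lt_of_le hstrict (hle _).2⟩
  have h3 := hS z hzA.1
  have h4 := hu z hzA.1
  have h5 : u z - S z = M := hzA.2
  have h6 : 2 * (d : ℝ) * (u z - S z) = 2 * d * M := by rw [h5]
  linarith

/-! ### Radial barriers -/

/-- Squared Euclidean distance on the lattice. -/
def sqDist {d : ℕ} (x z : Lat d) : ℝ := ∑ i, ((x i : ℝ) - z i) ^ 2

theorem sq_le_sqDist {d : ℕ} (x z : Lat d) (i : Fin d) : ((x i : ℝ) - z i) ^ 2 ≤ sqDist x z :=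
  Finset.single_le_sum (f := fun i => ((x i : ℝ) - z i) ^ 2) (fun _ _ => sq_nonneg _)
    (Finset.mem_univ i)

theorem sqDist_add_single {d : ℕ} (x z : Lat d) (j : Fin d) :
    sqDist (x + Pi.single j 1) z = sqDist x z + 2 * ((x j : ℝ) - z j) + 1 := by
  have h : ∀ i, (((x + Pi.single j 1 : Lat d) i : ℝ) - z i) ^ 2 =
      ((x i : ℝ) - z i) ^ 2 + if i = j then 2 * ((x j : ℝ) - z j) + 1 else 0 := fun i => by
    by_cases hij : i = j
    · subst hij; simp; ring
    · simp [hij]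
  simp only [sqDist, h, Finset.sum_add_distrib]
  simp; ring

theorem sqDist_sub_single {d : ℕ} (x z : Lat d) (j : Fin d) :
    sqDist (x - Pi.single j 1) z = sqDist x z - 2 * ((x j : ℝ) - z j) + 1 := by
  have h := sqDist_add_single (x - Pi.single j 1) z j
  simp at h
  linarith

theorem finite_sqDist_lt {d : ℕ} (z : Lat d) (R : ℝ) : {x : Lat d | sqDist x z < R}.Finite := by
  refine (Set.finite_Icc (fun i => z i - ⌈|R| + 1⌉) (fun i => z i + ⌈|R| + 1⌉)).subset ?_
  intro x hx
  have key : ∀ i, |(x i : ℝ) - z i| ≤ ⌈|R| + 1⌉ := fun i => by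
    have h1 := sq_le_sqDist x z i
    have h2 : sqDist x z < R := hx
    have h3 := le_abs_self R
    have h4 : ((x i : ℝ) - z i) ^ 2 ≤ (|R| + 1) ^ 2 := by nlinarith [abs_nonneg R]
    exact (abs_le_of_sq_le_sq h4 (by positivity)).trans (Int.le_ceil _)
  refine ⟨fun i => ?_, fun i => ?_⟩
  · have := (abs_le.mp (key i)).1
    have h' : -⌈|R| + 1⌉ ≤ x i - z i := by exact_mod_cast this
    simp only; linarith
  · have := (abs_le.mp (key i)).2
    have h' : x i - z i ≤ ⌈|R| + 1⌉ := by exact_mod_cast this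
    simp only; linarith

theorem two_mul_le_log_sub_log {t : ℝ} (h0 : 0 ≤ t) (h1 : t < 1) :
    2 * t ≤ Real.log (1 + t) - Real.log (1 - t) := by
  have h := Real.hasSum_log_sub_log_of_abs_lt_one (x := t) (by rw [abs_of_nonneg h0]; exact h1)
  have := h.summable.sum_le_tsum {0} (fun i _ => by positivity)
  rw [h.tsum_eq] at this
  simpa using this

theorem two_add_mul_sq_le_rpow_neg_add_rpow_neg {p t : ℝ} (hp : 0 ≤ p) (ht : |t| < 1) :
    2 + p * (p + 1) * t ^ 2 ≤ (1 + t) ^ (-p) + (1 - t) ^ (-p) := by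
  wlog h0 : 0 ≤ t generalizing t
  · have := this (t := -t) (by simpa using ht) (by linarith)
    simp only [neg_sq, sub_neg_eq_add, ← sub_eq_add_neg] at this
    linarith
  rw [abs_of_nonneg h0] at ht
  have hα : p / 2 * t ^ 2 ≤ -(p / 2) * (Real.log (1 + t) + Real.log (1 - t)) := by
    rw [← Real.log_mul (by linarith) (by linarith)]
    have : Real.log ((1 + t) * (1 - t)) ≤ -t ^ 2 := by
      have := Real.log_le_sub_one_of_pos (x := (1 + t) * (1 - t)) (by nlinarith)
      nlinarith
    nlinarith
  have hβ : p * t ≤ p / 2 * (Real.log (1 + t) - Real.log (1 - t)) := by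
    nlinarith [two_mul_le_log_sub_log h0 ht]
  set α := -(p / 2) * (Real.log (1 + t) + Real.log (1 - t)) with hαd
  set β := p / 2 * (Real.log (1 + t) - Real.log (1 - t)) with hβd
  have e1 : (1 + t) ^ (-p) = Real.exp α * Real.exp (-β) := by
    rw [Real.rpow_def_of_pos (by linarith), ← Real.exp_add]; congr 1; rw [hαd, hβd]; ring
  have e2 : (1 - t) ^ (-p) = Real.exp α * Real.exp β := by
    rw [Real.rpow_def_of_pos (by linarith), ← Real.exp_add]; congr 1; rw [hαd, hβd]; ring
  rw [e1, e2, ← mul_add]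
  have h2 : 2 + (p * t) ^ 2 ≤ Real.exp (-β) + Real.exp β := by
    have hβ0 : 0 ≤ β := (mul_nonneg hp h0).trans hβ
    have hs : β / 2 ≤ Real.sinh (β / 2) := Real.self_le_sinh_iff.mpr (by linarith)
    have hc := Real.cosh_two_mul (β / 2)
    have hq := Real.cosh_sq (β / 2)
    rw [mul_div_cancel₀ _ two_ne_zero, Real.cosh_eq] at hc
    nlinarith [mul_nonneg hp h0]
  have h3 : 1 + p / 2 * t ^ 2 ≤ Real.exp α := by
    have := Real.add_one_le_exp α; linarith
  have h4 : 0 ≤ p / 2 * t ^ 2 := by positivity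
  calc 2 + p * (p + 1) * t ^ 2 ≤ (1 + p / 2 * t ^ 2) * (2 + (p * t) ^ 2) := by
        nlinarith [mul_nonneg h4 (sq_nonneg (p * t))]
    _ ≤ _ := mul_le_mul h3 h2 (by positivity) (by positivity)

theorem rpow_neg_barrier_subharmonic {d : ℕ} (hd : 1 ≤ d) {x z : Lat d}
    (hx : 10 * (d : ℝ) ^ 2 ≤ sqDist x z) :
    2 * d * (sqDist x z + 1) ^ (-(((d : ℝ) - 1) / 2)) ≤
      nbrSum (fun y => (sqDist y z + 1) ^ (-(((d : ℝ) - 1) / 2))) x := by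
  set p : ℝ := ((d : ℝ) - 1) / 2 with hp
  set X := sqDist x z with hX
  have hd' : (1 : ℝ) ≤ d := by exact_mod_cast hd
  have hp0 : 0 ≤ p := by rw [hp]; linarith
  have hX10 : 10 ≤ X := by nlinarith
  have hu : 0 < X + 2 := by linarith
  have hterm : ∀ j, (X + 2) ^ (-p) * (2 + p * (p + 1) * (2 * ((x j : ℝ) - z j) / (X + 2)) ^ 2) ≤
      (sqDist (x + Pi.single j 1) z + 1) ^ (-p) + (sqDist (x - Pi.single j 1) z + 1) ^ (-p) := by
    intro j
    rw [sqDist_add_single, sqDist_sub_single, ← hX]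
    set t := 2 * ((x j : ℝ) - z j) / (X + 2) with ht
    have hj := sq_le_sqDist x z j
    have ht1 : |t| < 1 := by
      rw [ht, abs_div, abs_of_pos hu, div_lt_one hu]
      rw [abs_lt]
      constructor <;> nlinarith [sq_nonneg ((x j : ℝ) - z j - 1), sq_nonneg ((x j : ℝ) - z j + 1)]
    have hne : t * (X + 2) = 2 * ((x j : ℝ) - z j) := by rw [ht]; field_simp
    rw [abs_lt] at ht1
    have e1 : X + 2 * ((x j : ℝ) - z j) + 1 + 1 = (X + 2) * (1 + t) := by linarith
    have e2 : X - 2 * ((x j : ℝ) - z j) + 1 + 1 = (X + 2) * (1 - t) := by linarith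
    rw [e1, e2, Real.mul_rpow hu.le (by linarith), Real.mul_rpow hu.le (by linarith), ← mul_add]
    exact mul_le_mul_of_nonneg_left
      (two_add_mul_sq_le_rpow_neg_add_rpow_neg hp0 (abs_lt.mpr ht1)) (by positivity)
  have hsum : ∑ j : Fin d, (X + 2) ^ (-p) *
      (2 + p * (p + 1) * (2 * ((x j : ℝ) - z j) / (X + 2)) ^ 2) =
      (X + 2) ^ (-p) * (2 * d + 4 * p * (p + 1) * X / (X + 2) ^ 2) := by
    rw [← Finset.mul_sum, Finset.sum_add_distrib]
    congr 1
    have : ∀ j : Fin d, p * (p + 1) * (2 * ((x j : ℝ) - z j) / (X + 2)) ^ 2 =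
        4 * p * (p + 1) / (X + 2) ^ 2 * ((x j : ℝ) - z j) ^ 2 := fun j => by rw [div_pow]; ring
    simp only [this, ← Finset.mul_sum]
    rw [← sqDist, ← hX]
    simp; ring
  refine le_trans ?_ (hsum ▸ Finset.sum_le_sum fun j _ => hterm j)
  have hA : p < X + 1 := by nlinarith
  have hratio : (X + 1) ^ (-p) ≤ (X + 2) ^ (-p) * ((X + 1) / (X + 1 - p)) := by
    have h1 : X + 2 = (X + 1) * (1 + 1 / (X + 1)) := by field_simp; ring
    have h2 : (0 : ℝ) ≤ 1 + 1 / (X + 1) := by positivity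
    have hE : (1 + 1 / (X + 1)) ^ p ≤ (X + 1) / (X + 1 - p) := by
      calc (1 + 1 / (X + 1)) ^ p ≤ (Real.exp (1 / (X + 1))) ^ p := by
            gcongr
            linarith [Real.add_one_le_exp (1 / (X + 1))]
        _ = Real.exp (p / (X + 1)) := by rw [← Real.exp_mul]; congr 1; ring
        _ ≤ _ := by
            have := Real.add_one_le_exp (-(p / (X + 1)))
            rw [Real.exp_neg] at this
            have h3 : (X + 1) / (X + 1 - p) = (-(p / (X + 1)) + 1)⁻¹ := by
              have : X + 1 - p ≠ 0 := by linarith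
              have : X + 1 ≠ 0 := by linarith
              rw [eq_comm, inv_eq_iff_eq_inv, inv_div]
              field_simp
              ring
            rw [h3]
            refine (le_inv_comm₀ (Real.exp_pos _) ?_).mpr this
            have : p / (X + 1) < 1 := by rw [div_lt_one (by linarith)]; exact hA
            linarith
    rw [h1, Real.mul_rpow (by linarith) h2, Real.rpow_neg h2, mul_assoc]
    have hpos : 0 < (1 + 1 / (X + 1)) ^ p := by positivity
    have h4 : 1 ≤ ((1 + 1 / (X + 1)) ^ p)⁻¹ * ((X + 1) / (X + 1 - p)) := by
      rw [inv_mul_eq_div, one_le_div hpos]; exact hE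
    exact le_mul_of_one_le_right (by positivity) h4
  have hfin : 2 * d * ((X + 1) / (X + 1 - p)) ≤ 2 * d + 4 * p * (p + 1) * X / (X + 2) ^ 2 := by
    have hA' : 0 < X + 1 - p := by linarith
    have e : 2 * d * ((X + 1) / (X + 1 - p)) = 2 * d + 2 * d * p / (X + 1 - p) := by
      field_simp; ring
    rw [e]
    gcongr 2 * d + ?_
    rw [div_le_div_iff₀ hA' (by positivity)]
    have key : d * (X + 2) ^ 2 ≤ 2 * (p + 1) * X * (X + 1 - p) := by
      rw [hp]
      have h5 : 10 * (d : ℝ) ^ 2 * X ≤ X * X := by nlinarith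
      have h6 : (d : ℝ) ≤ d ^ 2 := by nlinarith
      have h7 : (d : ℝ) * X ≤ d ^ 2 * X := by nlinarith
      have h8 : X ≤ d ^ 2 * X := by nlinarith
      nlinarith
    nlinarith [mul_le_mul_of_nonneg_left key hp0]
  calc 2 * d * (X + 1) ^ (-p) ≤ 2 * d * ((X + 2) ^ (-p) * ((X + 1) / (X + 1 - p))) := by gcongr
    _ = (X + 2) ^ (-p) * (2 * d * ((X + 1) / (X + 1 - p))) := by ring
    _ ≤ _ := by gcongr

theorem nbrSum_mul_sub_const {d : ℕ} (f : Lat d → ℝ) (a b : ℝ) (x : Lat d) :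
    nbrSum (fun y => a * (f y - b)) x = a * (nbrSum f x - 2 * d * b) := by
  simp only [nbrSum, ← mul_add, ← Finset.mul_sum]
  congr 1
  have : ∀ j : Fin d, f (x + Pi.single j 1) - b + (f (x - Pi.single j 1) - b) =
      f (x + Pi.single j 1) + f (x - Pi.single j 1) - 2 * b := fun j => by ring
  simp only [this, Finset.sum_sub_distrib]
  simp; ring

theorem ball_lower_bound {d : ℕ} (hd : 3 ≤ d) {S : Lat d → ℝ} (hS0 : ∀ x, 0 ≤ S x) {z : Lat d}
    {m Q R : ℝ} (hm : 0 ≤ m) (hQ : 10 * (d : ℝ) ^ 2 ≤ Q) (hQR : Q ≤ R)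
    (hS : ∀ x, sqDist x z < R → nbrSum S x ≤ 2 * d * S x)
    (hin : ∀ x, sqDist x z ≤ Q → m ≤ S x) {x : Lat d} (hx : sqDist x z + 1 ≤ (R + 1) / 2) :
    m * (Q / (2 * (R + 1))) ^ (((d : ℝ) - 1) / 2) ≤ S x := by
  set p : ℝ := ((d : ℝ) - 1) / 2 with hp
  have hd' : (3 : ℝ) ≤ d := by exact_mod_cast hd
  have hp1 : 1 ≤ p := by rw [hp]; linarith
  have hQ0 : 0 < Q := by nlinarith
  have hR0 : 0 < R := by linarith
  by_cases hxQ : sqDist x z ≤ Q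
  · refine le_trans ?_ (hin x hxQ)
    refine mul_le_of_le_one_right hm (Real.rpow_le_one (by positivity) ?_ (by linarith))
    rw [div_le_one (by positivity)]
    linarith
  push Not at hxQ
  have hC : 0 ≤ m * (Q / 2) ^ p := by positivity
  let u : Lat d → ℝ := fun y => m * (Q / 2) ^ p * ((sqDist y z + 1) ^ (-p) - (R + 1) ^ (-p))
  have hout : ∀ w, R ≤ sqDist w z → u w ≤ S w := fun w hw => by
    refine le_trans (mul_nonpos_of_nonneg_of_nonpos hC ?_) (hS0 w)
    rw [sub_nonpos]
    exact Real.rpow_le_rpow_of_nonpos (by linarith) (by linarith) (by linarith)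
  have hinn : ∀ w, Q / 2 ≤ sqDist w z + 1 → sqDist w z ≤ Q → u w ≤ S w := fun w hw hw' => by
    refine le_trans ?_ (hin w hw')
    have h1 : (sqDist w z + 1) ^ (-p) ≤ (Q / 2) ^ (-p) :=
      Real.rpow_le_rpow_of_nonpos (by positivity) hw (by linarith)
    have h2 : 0 ≤ (R + 1) ^ (-p) := by positivity
    calc u w ≤ m * (Q / 2) ^ p * (Q / 2) ^ (-p) := by
          apply mul_le_mul_of_nonneg_left _ hC; linarith
      _ = m := by rw [mul_assoc, ← Real.rpow_add (by positivity)]; simp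
  have hu := comparison_principle (S := S) (u := u) (A := {y | Q < sqDist y z ∧ sqDist y z < R})
    (by omega) ((finite_sqDist_lt z R).subset fun y hy => hy.2) (fun y hy => hS y hy.2)
    (fun y hy => by
      rw [nbrSum_mul_sub_const]
      have := rpow_neg_barrier_subharmonic (by omega) (hQ.trans hy.1.le)
      have := mul_le_mul_of_nonneg_left this hC
      simp only [u]
      linarith)
    (fun y hy j => by
      have hb : ∀ w, w ∉ {y | Q < sqDist y z ∧ sqDist y z < R} →
          sqDist y z ≤ 2 * sqDist w z + 2 → u w ≤ S w := fun w hw hyw => by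
        by_cases hwR : R ≤ sqDist w z
        · exact hout w hwR
        · have hwQ : sqDist w z ≤ Q := by
            by_contra! h
            exact hw ⟨h, not_le.mp hwR⟩
          exact hinn w (by linarith [hy.1]) hwQ
      have hj := sq_le_sqDist y z j
      refine ⟨fun h => hb _ h ?_, fun h => hb _ h ?_⟩
      · rw [sqDist_add_single]
        nlinarith [sq_nonneg ((y j : ℝ) - z j + 2)]
      · rw [sqDist_sub_single]
        nlinarith [sq_nonneg ((y j : ℝ) - z j - 2)]) x ⟨hxQ, by linarith⟩
  refine le_trans ?_ hu
  have h1 : 2 * (R + 1) ^ (-p) ≤ (sqDist x z + 1) ^ (-p) := by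
    have h2 : ((R + 1) / 2) ^ (-p) ≤ (sqDist x z + 1) ^ (-p) :=
      Real.rpow_le_rpow_of_nonpos (by linarith) hx (by linarith)
    refine le_trans ?_ h2
    rw [Real.div_rpow (by linarith) (by norm_num), Real.rpow_neg (by norm_num : (0:ℝ) ≤ 2),
      div_inv_eq_mul, mul_comm]
    gcongr
    calc (2 : ℝ) = 2 ^ (1 : ℝ) := by simp
      _ ≤ 2 ^ p := Real.rpow_le_rpow_of_exponent_le (by norm_num) hp1
  calc m * (Q / (2 * (R + 1))) ^ p = m * (Q / 2) ^ p * (R + 1) ^ (-p) := by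
        rw [← div_div, Real.div_rpow (by positivity) (by positivity),
          Real.rpow_neg (by positivity)]
        ring
    _ ≤ _ := by apply mul_le_mul_of_nonneg_left _ hC; linarith

theorem div_pow_le_of_dist_eq {d : ℕ} {S : Lat d → ℝ} (hS0 : ∀ x, 0 ≤ S x) (hd : 0 < d)
    (y : Lat d) (n : ℕ) (w : Lat d) (hw : ∑ i, (w i - y i).natAbs = n)
    (hS : ∀ x, ∑ i, (x i - y i).natAbs ≤ n → nbrSum S x ≤ 2 * d * S x) :
    S y / (2 * d) ^ n ≤ S w := by
  have hd' : (0 : ℝ) < d := by exact_mod_cast hd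
  induction n generalizing w with
  | zero =>
    have : w = y := by
      funext i
      have := (Finset.sum_eq_zero_iff.mp hw) i (Finset.mem_univ i)
      omega
    simp [this]
  | succ n ih =>
    obtain ⟨j, hj⟩ : ∃ j, w j ≠ y j := by
      by_contra! h
      simp [h] at hw
    have hnb : ∀ w', (∀ i, i ≠ j → w' i = w i) → (w' j - y j).natAbs + 1 = (w j - y j).natAbs →
        S y / (2 * d) ^ n ≤ S w' := fun w' h1 h2 => by
      refine ih w' ?_ fun x hx => hS x (by omega)
      have e1 := Finset.add_sum_erase Finset.univ (fun i => (w' i - y i).natAbs) (Finset.mem_univ j)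
      have e2 := Finset.add_sum_erase Finset.univ (fun i => (w i - y i).natAbs) (Finset.mem_univ j)
      have e3 : ∑ i ∈ Finset.univ.erase j, (w' i - y i).natAbs =
          ∑ i ∈ Finset.univ.erase j, (w i - y i).natAbs :=
        Finset.sum_congr rfl fun i hi => by rw [h1 i (Finset.ne_of_mem_erase hi)]
      omega
    have hsum : S y / (2 * d) ^ n ≤ nbrSum S w := by
      have hle : S (w + Pi.single j 1) + S (w - Pi.single j 1) ≤ nbrSum S w :=
        Finset.single_le_sum (f := fun j => S (w + Pi.single j 1) + S (w - Pi.single j 1))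
          (fun i _ => add_nonneg (hS0 _) (hS0 _)) (Finset.mem_univ j)
      rcases lt_or_gt_of_ne hj with h | h
      · have := hnb (w + Pi.single j 1) (fun i hi => by simp [hi])
          (by simp only [Pi.add_apply, Pi.single_eq_same]; omega)
        linarith [hS0 (w - Pi.single j 1)]
      · have := hnb (w - Pi.single j 1) (fun i hi => by simp [hi])
          (by simp only [Pi.sub_apply, Pi.single_eq_same]; omega)
        linarith [hS0 (w + Pi.single j 1)]
    rw [pow_succ, ← div_div, div_le_iff₀ (by positivity), mul_comm (S w)]
    exact hsum.trans (hS w hw.le)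

theorem chain_step {d : ℕ} (hd : 3 ≤ d) {S : Lat d → ℝ} (hS0 : ∀ x, 0 ≤ S x) {a b : ℤ}
    {i : Fin d} (hS : ∀ x : Lat d, a < x i → x i < b → nbrSum S x ≤ 2 * d * S x)
    {m : ℝ} (hm : 0 ≤ m) {τ : ℕ} (hτ : 4 ≤ τ) {z z' : Lat d}
    (hza : a + 4 * (d * τ) ≤ z i) (hzb : z i ≤ b - 4 * (d * τ))
    (hin : ∀ x, sqDist x z ≤ ((d : ℝ) * τ) ^ 2 → m ≤ S x)
    (hz' : ∀ k, z k - τ ≤ z' k ∧ z' k ≤ z k + τ) {x : Lat d}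
    (hx : sqDist x z' ≤ ((d : ℝ) * τ) ^ 2) :
    m * (1 / 20 : ℝ) ^ (((d : ℝ) - 1) / 2) ≤ S x := by
  have hd' : (3 : ℝ) ≤ d := by exact_mod_cast hd
  have hτ' : (4 : ℝ) ≤ τ := by exact_mod_cast hτ
  set ρ : ℝ := d * τ with hρ
  have hρ0 : 0 < ρ := by positivity
  have hρ4 : 4 * (d : ℝ) ≤ ρ := by rw [hρ]; nlinarith
  have hzz : sqDist z' z ≤ ρ ^ 2 := by
    calc sqDist z' z ≤ ∑ _i : Fin d, (τ : ℝ) ^ 2 := by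
          refine Finset.sum_le_sum fun k _ => ?_
          have h1 : (z k : ℝ) - τ ≤ z' k := by exact_mod_cast (hz' k).1
          have h2 : (z' k : ℝ) ≤ z k + τ := by exact_mod_cast (hz' k).2
          exact sq_le_sq' (by linarith) (by linarith)
      _ = d * (τ : ℝ) ^ 2 := by simp
      _ ≤ ρ ^ 2 := by
          rw [hρ, mul_pow]
          gcongr
          nlinarith
  have hxz : sqDist x z ≤ 4 * ρ ^ 2 := by
    calc sqDist x z ≤ ∑ k, (2 * ((x k : ℝ) - z' k) ^ 2 + 2 * ((z' k : ℝ) - z k) ^ 2) :=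
          Finset.sum_le_sum fun k _ => by
            nlinarith [sq_nonneg (((x k : ℝ) - z' k) - ((z' k : ℝ) - z k))]
      _ = 2 * sqDist x z' + 2 * sqDist z' z := by
          rw [Finset.sum_add_distrib, ← Finset.mul_sum, ← Finset.mul_sum, sqDist, sqDist]
      _ ≤ _ := by linarith
  have h := ball_lower_bound hd hS0 (z := z) (Q := ρ ^ 2) (R := 9 * ρ ^ 2) hm (by nlinarith)
    (by nlinarith) (fun y hy => by
      have h1 := sq_le_sqDist y z i
      have h2 : |(y i : ℝ) - z i| < 3 * ρ :=
        abs_lt_of_sq_lt_sq (by nlinarith) (by positivity)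
      rw [abs_lt] at h2
      have h3 : (a : ℝ) + 4 * ρ ≤ z i := by rw [hρ]; exact_mod_cast hza
      have h4 : (z i : ℝ) ≤ b - 4 * ρ := by rw [hρ]; exact_mod_cast hzb
      refine hS y ?_ ?_
      · have : (a : ℝ) < y i := by linarith
        exact_mod_cast this
      · have : (y i : ℝ) < b := by linarith
        exact_mod_cast this) hin (x := x) (by nlinarith)
  refine le_trans ?_ h
  refine mul_le_mul_of_nonneg_left (Real.rpow_le_rpow (by norm_num) ?_ (by linarith)) hm
  rw [div_le_div_iff₀ (by norm_num) (by positivity)]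
  nlinarith

theorem chain_lower_bound {d : ℕ} (hd : 3 ≤ d) {S : Lat d → ℝ} (hS0 : ∀ x, 0 ≤ S x) {a b : ℤ}
    {i : Fin d} (hS : ∀ x : Lat d, a < x i → x i < b → nbrSum S x ≤ 2 * d * S x)
    {m : ℝ} (hm : 0 ≤ m) {τ : ℕ} (hτ : 4 ≤ τ) {z : Lat d}
    (hza : a + 4 * (d * τ) ≤ z i) (hzb : z i ≤ b - 4 * (d * τ))
    (hin : ∀ x, sqDist x z ≤ ((d : ℝ) * τ) ^ 2 → m ≤ S x) (K : ℕ) {z' : Lat d}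
    (hza' : a + 4 * (d * τ) ≤ z' i) (hzb' : z' i ≤ b - 4 * (d * τ))
    (hz' : ∀ k, z k - K * τ ≤ z' k ∧ z' k ≤ z k + K * τ) {x : Lat d}
    (hx : sqDist x z' ≤ ((d : ℝ) * τ) ^ 2) :
    m * ((1 / 20 : ℝ) ^ (((d : ℝ) - 1) / 2)) ^ K ≤ S x := by
  induction K generalizing z' x with
  | zero =>
    have : z' = z := by
      funext k
      have := hz' k
      simp at this
      omega
    subst this
    simpa using hin x hx
  | succ K ih =>
    let w : Lat d := fun k => max (z k - K * τ) (min (z k + K * τ) (z' k))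
    have hz'' : ∀ k, z k - (K * τ + τ) ≤ z' k ∧ z' k ≤ z k + (K * τ + τ) := fun k => by
      have := hz' k
      push_cast [add_mul] at this
      simpa using this
    have hK : (0 : ℤ) ≤ K * τ := by positivity
    rw [pow_succ, ← mul_assoc]
    refine chain_step hd hS0 hS (by positivity) hτ (z := w) (z' := z') ?_ ?_
      (fun y hy => ih (z' := w) ?_ ?_ ?_ hy) ?_ hx
    · simp only [w]; omega
    · simp only [w]; omega
    · simp only [w]; omega
    · simp only [w]; omega
    · intro k; simp only [w]; omega
    · intro k
      have := hz'' k
      simp only [w]; omega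

theorem sq_add_sq_le_sqDist {d : ℕ} (x z : Lat d) {j k : Fin d} (h : k ≠ j) :
    ((x k : ℝ) - z k) ^ 2 + ((x j : ℝ) - z j) ^ 2 ≤ sqDist x z := by
  have := Finset.sum_le_sum_of_subset_of_nonneg (s := {k, j}) (t := Finset.univ)
    (f := fun i => ((x i : ℝ) - z i) ^ 2) (Finset.subset_univ _) (fun _ _ _ => sq_nonneg _)
  rwa [Finset.sum_pair h] at this

theorem boundary_barrier {d : ℕ} (hd : 1 ≤ d) {S : Lat d → ℝ} (hS0 : ∀ x, 0 ≤ S x) {x : Lat d}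
    {j : Fin d} {e s₀ L : ℤ} (he : e = 1 ∨ e = -1) (hs₀ : 0 < s₀) (hsL : s₀ < L)
    (hS : ∀ z : Lat d, 0 < e * (z j - x j) + s₀ → e * (z j - x j) + s₀ < L →
      nbrSum S z ≤ 2 * d * S z) {m : ℝ} (hm : 0 ≤ m)
    (htop : ∀ z : Lat d, e * (z j - x j) + s₀ = L → (∀ k, |z k - x k| ≤ d * L) → m ≤ S z) :
    m / (d * L) ≤ S x := by
  have hd' : (1 : ℝ) ≤ d := by exact_mod_cast hd
  have hL : (0 : ℝ) < L := by exact_mod_cast hs₀.trans hsL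
  have hs₀' : (1 : ℝ) ≤ s₀ := by exact_mod_cast hs₀
  have hsL' : (s₀ : ℝ) < L := by exact_mod_cast hsL
  have he2 : (e : ℝ) ^ 2 = 1 := by rcases he with h | h <;> simp [h]
  let s : Lat d → ℝ := fun z => e * ((z j : ℝ) - x j) + s₀
  let T : Lat d → ℝ := fun z => sqDist z x - ((z j : ℝ) - x j) ^ 2
  have hT0 : ∀ z, 0 ≤ T z := fun z => sub_nonneg.mpr (sq_le_sqDist z x j)
  have hcast : ∀ z : Lat d, s z = ((e * (z j - x j) + s₀ : ℤ) : ℝ) := fun z => by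
    simp [s]
  let u : Lat d → ℝ := fun z => m / (d * L ^ 2) * (L * s z + (d - 1) * s z ^ 2 - T z)
  have hC : 0 ≤ m / (d * (L : ℝ) ^ 2) := by positivity
  have hharm : ∀ z, nbrSum u z = 2 * d * u z := fun z => by
    have h1 : ∀ k : Fin d, u (z + Pi.single k 1) + u (z - Pi.single k 1) =
        m / (d * L ^ 2) * (2 * (L * s z + (d - 1) * s z ^ 2 - T z) - 2) +
          if k = j then m / (d * L ^ 2) * (2 * d) else 0 := fun k => by
      by_cases hk : k = j
      · subst hk
        simp only [u, s, T, sqDist_add_single, sqDist_sub_single, Pi.add_apply, Pi.sub_apply,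
          Pi.single_eq_same, if_true]
        push_cast
        linear_combination (m / (d * (L : ℝ) ^ 2) * 2 * (d - 1)) * he2
      · have hk' : j ≠ k := fun h => hk h.symm
        simp only [u, s, T, sqDist_add_single, sqDist_sub_single, Pi.add_apply, Pi.sub_apply,
          Pi.single_eq_of_ne hk', if_neg hk]
        push_cast
        ring
    simp only [nbrSum, h1, Finset.sum_add_distrib]
    simp [u]
    ring
  let A : Set (Lat d) := {z | 0 < s z ∧ s z < L ∧ T z < d * L ^ 2}
  have hfin : A.Finite := (finite_sqDist_lt x (d * L ^ 2 + L ^ 2)).subset fun z hz => by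
    have h1 : ((z j : ℝ) - x j) ^ 2 = (s z - s₀) ^ 2 := by
      simp only [s]; linear_combination (-((z j : ℝ) - x j) ^ 2) * he2
    have h2 : (s z - s₀) ^ 2 ≤ (L : ℝ) ^ 2 := sq_le_sq' (by linarith [hz.1]) (by linarith [hz.2.1])
    have h3 := hz.2.2
    simp only [T] at h3
    simp only [Set.mem_ofPred_eq]
    linarith
  have hbd : ∀ w, 0 ≤ s w → s w ≤ L → w ∉ A → u w ≤ S w := fun w h0 h1 hw => by
    by_cases hT : d * (L : ℝ) ^ 2 ≤ T w
    · refine le_trans (mul_nonpos_of_nonneg_of_nonpos hC ?_) (hS0 w)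
      have h2 : s w ^ 2 ≤ (L : ℝ) ^ 2 := by gcongr
      nlinarith
    push Not at hT
    rcases h0.eq_or_lt with h0 | h0
    · refine le_trans (mul_nonpos_of_nonneg_of_nonpos hC ?_) (hS0 w)
      rw [← h0]
      nlinarith [hT0 w]
    · have hsw : s w = L := by
        by_contra hne
        exact hw ⟨h0, lt_of_le_of_ne h1 hne, hT⟩
      refine le_trans ?_ (htop w ?_ fun k => ?_)
      · calc u w ≤ m / (d * L ^ 2) * (d * L ^ 2) := by
              apply mul_le_mul_of_nonneg_left _ hC
              rw [hsw]
              nlinarith [hT0 w]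
          _ = m := by field_simp
      · rw [hcast] at hsw
        exact_mod_cast hsw
      · have hk : ((w k : ℝ) - x k) ^ 2 ≤ (d * L) ^ 2 := by
          have hdL : d * (L : ℝ) ^ 2 ≤ (d * L) ^ 2 := by
            rw [mul_pow]; gcongr; nlinarith
          by_cases hkj : k = j
          · subst hkj
            have h2 : ((w k : ℝ) - x k) ^ 2 = (s w - s₀) ^ 2 := by
              simp only [s]; linear_combination (-((w k : ℝ) - x k) ^ 2) * he2
            rw [h2, hsw]
            nlinarith
          · have h2 := sq_add_sq_le_sqDist w x hkj
            simp only [T] at hT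
            linarith
        have := abs_le_of_sq_le_sq hk (by positivity)
        exact_mod_cast this
  have hsint : ∀ z, 0 < s z → 1 ≤ s z := fun z hz => by
    rw [hcast] at hz ⊢
    exact_mod_cast hz
  have hsint' : ∀ z, s z < L → s z ≤ L - 1 := fun z hz => by
    rw [hcast] at hz ⊢
    have : e * (z j - x j) + s₀ < L := by exact_mod_cast hz
    have : e * (z j - x j) + s₀ ≤ L - 1 := by omega
    exact_mod_cast this
  have hsnb : ∀ z k, |s (z + Pi.single k 1) - s z| ≤ 1 ∧ |s (z - Pi.single k 1) - s z| ≤ 1 :=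
    fun z k => by
      by_cases hk : k = j
      · subst hk
        rcases he with h | h <;> simp [s, h]
      · have hk' : j ≠ k := fun h => hk h.symm
        simp [s, Pi.single_eq_of_ne hk']
  have hxu := comparison_principle (S := S) (u := u) (by omega) hfin
    (fun z hz => hS z (by have := hz.1; rw [hcast] at this; exact_mod_cast this)
      (by have := hz.2.1; rw [hcast] at this; exact_mod_cast this))
    (fun z _ => (hharm z).ge)
    (fun z hz k => by
      have h1 := hsint z hz.1
      have h2 := hsint' z hz.2.1
      have h3 := hsnb z k
      rw [abs_le, abs_le] at h3
      exact ⟨hbd _ (by linarith [h3.1.1]) (by linarith [h3.1.2]),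
        hbd _ (by linarith [h3.2.1]) (by linarith [h3.2.2])⟩)
    x ⟨by simp [s]; linarith, by simp [s]; linarith, by simp [T, sqDist]; positivity⟩
  refine le_trans ?_ hxu
  have hsx : s x = s₀ := by simp [s]
  have hTx : T x = 0 := by simp [T, sqDist]
  calc m / (d * L) = m / (d * L ^ 2) * L := by field_simp
    _ ≤ u x := by
      apply mul_le_mul_of_nonneg_left _ hC
      rw [hsx, hTx]
      nlinarith [mul_nonneg (sub_nonneg.mpr hd') (sq_nonneg (s₀ : ℝ))]

set_option maxHeartbeats 2000000 in
theorem lattice_lower_bound {d : ℕ} (hd : 3 ≤ d) :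
    ∃ c : ℝ, 0 < c ∧ ∃ N₀ : ℕ, 0 < N₀ ∧ ∀ N : ℕ, N₀ ≤ N → ∀ a : ℤ, 0 ≤ a → 8 * a ≤ N →
      ∀ S : Lat d → ℝ, (∀ x, 0 ≤ S x) →
      (∀ (i : Fin d) (x : Lat d), a < x i → x i < N - a → nbrSum S x ≤ 2 * d * S x) →
      ∀ (y : Lat d) (i : Fin d), (∀ k, 0 ≤ y k ∧ y k ≤ N) →
        N ≤ 8 * (y i - a) → N ≤ 8 * (N - a - y i) →
      ∀ (x : Lat d) (j : Fin d), (∀ k, 0 ≤ x k ∧ x k ≤ N) → a < x j → x j < N - a →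
        c * S y / (N : ℝ) ^ d ≤ S x := by
  set p : ℝ := ((d : ℝ) - 1) / 2 with hp
  have hd' : (3 : ℝ) ≤ d := by exact_mod_cast hd
  set κ : ℝ := (1 / 20 : ℝ) ^ p with hκ
  have hκ0 : 0 < κ := by positivity
  have hκ1 : κ ≤ 1 := Real.rpow_le_one (by norm_num) (by norm_num) (by rw [hp]; linarith)
  set K₁ := 128 * d with hK₁
  set K₂ := 128 * d + 4 * d ^ 2 with hK₂
  refine ⟨κ ^ K₁ * κ ^ K₂ / ((2 * d) ^ (10 * d ^ 2) * d), by positivity, 64 * d * (10 * d),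
    by positivity, ?_⟩
  intro N hN a ha haN S hS0 hS y i hy hyi hyi' x j hx hxj hxj'
  set τ := N / (64 * d) with hτdef
  have hτ10 : 10 * d ≤ τ := by
    rw [hτdef, Nat.le_div_iff_mul_le (by positivity)]
    linarith
  have hτN : 64 * (d * τ) ≤ N := by
    have := Nat.div_mul_le_self N (64 * d)
    rw [← hτdef] at this
    linarith
  have hNτ : N ≤ 128 * d * τ := by
    have := Nat.lt_div_mul_add (a := N) (b := 64 * d) (by positivity)
    rw [← hτdef] at this
    nlinarith
  have hτNz : 64 * ((d : ℤ) * τ) ≤ N := by exact_mod_cast hτN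
  have hNτz : (N : ℤ) ≤ 128 * d * τ := by exact_mod_cast hNτ
  have hNτz' : (N : ℤ) ≤ 128 * (d * τ) := by rw [← mul_assoc]; exact hNτz
  have hτNr : 64 * ((d : ℝ) * τ) ≤ N := by exact_mod_cast hτN
  have hdτ : 10 * d ^ 2 ≤ d * τ := by nlinarith
  have hdτz : 10 * (d : ℤ) ^ 2 ≤ d * τ := by exact_mod_cast hdτ
  have hdτr : 10 * (d : ℝ) ^ 2 ≤ d * τ := by exact_mod_cast hdτ
  have hN0 : (0 : ℝ) < N := by nlinarith
  have hSy := hS0 y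
  set m₁ := S y / (2 * d) ^ (10 * d ^ 2) with hm₁
  have hm₁0 : 0 ≤ m₁ := by positivity
  have hnear : ∀ w, sqDist w y ≤ 10 * (d : ℝ) ^ 2 → m₁ ≤ S w := fun w hw => by
    have hl1 : ∑ k, (w k - y k).natAbs ≤ 10 * d ^ 2 := by
      have : ((∑ k, (w k - y k).natAbs : ℕ) : ℝ) ≤ sqDist w y := by
        rw [Nat.cast_sum]
        refine Finset.sum_le_sum fun k _ => ?_
        have h1 : (((w k - y k).natAbs : ℕ) : ℤ) ≤ (w k - y k) ^ 2 := by
          rw [← Int.natAbs_sq]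
          exact_mod_cast Nat.le_self_pow two_ne_zero _
        calc (((w k - y k).natAbs : ℕ) : ℝ) = (((w k - y k).natAbs : ℤ) : ℝ) := by
              rw [Int.cast_natCast]
          _ ≤ (((w k - y k) ^ 2 : ℤ) : ℝ) := Int.cast_le.mpr h1
          _ = ((w k : ℝ) - y k) ^ 2 := by push_cast; rfl
      exact_mod_cast this.trans hw
    refine le_trans ?_ (div_pow_le_of_dist_eq hS0 (by omega) y _ w rfl fun v hv => hS i v ?_ ?_)
    · rw [hm₁]
      gcongr
      · linarith
    all_goals
      have h1 : (v i - y i).natAbs ≤ ∑ k, (v k - y k).natAbs :=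
        Finset.single_le_sum (f := fun k => (v k - y k).natAbs) (fun _ _ => Nat.zero_le _)
          (Finset.mem_univ i)
      have h2 : ((v i - y i).natAbs : ℤ) ≤ 10 * (d : ℤ) ^ 2 := by
        exact_mod_cast h1.trans (hv.trans hl1)
      omega
  set m₂ := m₁ / (N : ℝ) ^ (d - 1) with hm₂
  have hm₂0 : 0 ≤ m₂ := by positivity
  have hρ : 30 ≤ (d : ℝ) * τ := by nlinarith
  have hball : ∀ w, sqDist w y ≤ ((d : ℝ) * τ) ^ 2 → m₂ ≤ S w := fun w hw => by
    have h := ball_lower_bound hd hS0 (z := y) (Q := 10 * (d : ℝ) ^ 2)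
      (R := 9 * ((d : ℝ) * τ) ^ 2) hm₁0 le_rfl (by nlinarith) (fun v hv => by
        have h1 := sq_le_sqDist v y i
        have h2 : |(v i : ℝ) - y i| < 3 * (d * τ) :=
          abs_lt_of_sq_lt_sq (by nlinarith) (by positivity)
        have h3 : |v i - y i| < 3 * (d * τ) := by exact_mod_cast h2
        rw [abs_lt] at h3
        exact hS i v (by omega) (by omega)) hnear (x := w) (by nlinarith)
    refine le_trans ?_ h
    rw [hm₂, div_eq_mul_inv]
    refine mul_le_mul_of_nonneg_left ?_ hm₁0
    have h1 : ((N : ℝ) ^ (d - 1))⁻¹ = (((N : ℝ) ^ 2)⁻¹) ^ p := by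
      rw [Real.inv_rpow (by positivity), ← Real.rpow_natCast, ← Real.rpow_natCast,
        ← Real.rpow_mul hN0.le, Nat.cast_sub (by omega), hp]
      congr 2
      push_cast
      ring
    rw [h1]
    refine Real.rpow_le_rpow (by positivity) ?_ (by rw [hp]; linarith)
    rw [← one_div, div_le_div_iff₀ (by positivity) (by positivity)]
    have h2 : (64 * ((d : ℝ) * τ)) ^ 2 ≤ (N : ℝ) ^ 2 := by gcongr
    have h3 : (1 : ℝ) * N ^ 2 ≤ 10 * (d : ℝ) ^ 2 * N ^ 2 := by
      gcongr
      nlinarith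
    nlinarith
  let z₀ : Lat d := fun _ => (N : ℤ) / 2
  have hcen : ∀ w, sqDist w z₀ ≤ ((d : ℝ) * τ) ^ 2 → m₂ * κ ^ K₁ ≤ S w := fun w hw => by
    refine chain_lower_bound hd hS0 (hS i) hm₂0 (by omega) (by omega) (by omega) hball K₁
      (z' := z₀) (by simp only [z₀]; omega) (by simp only [z₀]; omega) (fun k => ?_) hw
    have := hy k
    simp only [z₀]
    push_cast [hK₁]
    omega
  set m₃ := m₂ * κ ^ K₁ * κ ^ K₂ with hm₃
  have hm₃0 : 0 ≤ m₃ := by positivity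
  have htarget : ∀ z : Lat d, a + 4 * (d * τ) ≤ z j → z j ≤ N - a - 4 * (d * τ) →
      (∀ k, -(4 * (d ^ 2 * τ)) ≤ z k ∧ z k ≤ N + 4 * (d ^ 2 * τ)) → m₃ ≤ S z :=
    fun z h1 h2 h3 => by
      refine chain_lower_bound hd hS0 (hS j) (by positivity) (by omega) (z := z₀)
        (by simp only [z₀]; omega) (by simp only [z₀]; omega) hcen K₂ h1 h2 (fun k => ?_)
        (x := z) (by simp [sqDist]; positivity)
      have := h3 k
      have e : ((K₂ : ℕ) : ℤ) * τ = 128 * d * τ + 4 * (d ^ 2 * τ) := by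
        push_cast [hK₂]; ring
      simp only [z₀]
      rw [e]
      omega
  have hd2 : (0 : ℤ) ≤ d ^ 2 * τ := by positivity
  have hρz : (0 : ℤ) < d * τ := by nlinarith
  have hfinal : m₃ / (d * N) ≤ S x := by
    have hmono : ∀ L : ℤ, L = 4 * (d * τ) → m₃ / (d * N) ≤ m₃ / (d * L) := fun L hL => by
      rw [hL]
      push_cast
      gcongr
      linarith
    have hdL : (d : ℤ) * (4 * (d * τ)) = 4 * (d ^ 2 * τ) := by ring
    by_cases hlo : x j < a + 4 * (d * τ)
    · refine (hmono _ rfl).trans (boundary_barrier (by omega) hS0 (j := j) (e := 1)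
        (s₀ := x j - a) (Or.inl rfl) (by omega) (by omega)
        (fun z h1 h2 => hS j z (by omega) (by omega)) hm₃0 fun z h1 h2 => ?_)
      refine htarget z (by omega) (by omega) fun k => ?_
      have := h2 k
      rw [hdL, abs_le] at this
      have := hx k
      omega
    by_cases hhi : N - a - 4 * (d * τ) < x j
    · refine (hmono _ rfl).trans (boundary_barrier (by omega) hS0 (j := j) (e := -1)
        (s₀ := N - a - x j) (Or.inr rfl) (by omega) (by omega)
        (fun z h1 h2 => hS j z (by omega) (by omega)) hm₃0 fun z h1 h2 => ?_)
      refine htarget z (by omega) (by omega) fun k => ?_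
      have := h2 k
      rw [hdL, abs_le] at this
      have := hx k
      omega
    · refine le_trans (div_le_self hm₃0 ?_) (htarget x (by omega) (by omega) fun k => ?_)
      · nlinarith
      · have := hx k
        omega
  refine le_trans (le_of_eq ?_) hfinal
  have hpow : (N : ℝ) ^ d = N ^ (d - 1) * N := by
    rw [← pow_succ]; congr 1; omega
  have alg : ∀ k₁ k₂ P q s n D : ℝ,
      k₁ * k₂ / (P * D) * s / (q * n) = s / P / q * k₁ * k₂ / (D * n) := fun k₁ k₂ P q s n D => by
    simp only [div_eq_mul_inv, mul_inv]
    ring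
  rw [hm₃, hm₂, hm₁, hpow]
  exact alg _ _ _ _ _ _ _

theorem one_ne_neg_one_zmod {N : ℕ} (hN : 3 ≤ N) : (1 : ZMod N) ≠ -1 := fun h => by
  have h2 : ((2 : ℕ) : ZMod N) = 0 := by
    push_cast
    linear_combination h
  rw [ZMod.natCast_eq_zero_iff] at h2
  exact absurd (Nat.le_of_dvd (by norm_num) h2) (by omega)

theorem sum_adj_eq_nbrSum {d N : ℕ} [NeZero N] (hN : 3 ≤ N) (g : Torus d N → ℝ) (x : Torus d N) :
    (∑ y, if adj x y then g y else 0) = nbrSum g x := by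
  have h1 : (1 : ZMod N) ≠ 0 := by
    have : Fact (1 < N) := ⟨by omega⟩
    exact one_ne_zero
  have h2 := one_ne_neg_one_zmod hN
  let ε : Bool → ZMod N := fun b => if b then 1 else -1
  have hε : ∀ b, ε b ≠ 0 := fun b => by cases b <;> simpa [ε] using h1
  have hεinj : Function.Injective ε := fun b b' h => by
    cases b <;> cases b' <;> simp [ε, h2, h2.symm] at h ⊢
  let e : Fin d × Bool → Torus d N := fun q => x + Pi.single q.1 (ε q.2)
  have hinj : Function.Injective e := fun q q' h => by
    have h : Pi.single q.1 (ε q.2) = (Pi.single q'.1 (ε q'.2) : Torus d N) :=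
      add_left_cancel h
    have hq : q.1 = q'.1 := by
      by_contra hne
      have := congrFun h q.1
      rw [Pi.single_eq_same, Pi.single_eq_of_ne hne] at this
      exact hε _ this
    rw [hq] at h
    have h3 := congrFun h q'.1
    rw [Pi.single_eq_same, Pi.single_eq_same] at h3
    exact Prod.ext hq (hεinj h3)
  have hadj : ∀ y, adj x y ↔ y ∈ Finset.univ.image e := fun y => by
    simp only [Finset.mem_image, Finset.mem_univ, true_and]
    constructor
    · rintro ⟨-, i, hi, hj⟩
      refine ⟨(i, decide (y i = x i + 1)), funext fun k => ?_⟩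
      by_cases hk : k = i
      · subst hk
        by_cases hy : y k = x k + 1
        · simp [e, ε, hy]
        · have := hi.resolve_left hy
          simp [e, ε, hy]
          linear_combination this
      · simp [e, hk, hj k hk]
    · rintro ⟨⟨i, b⟩, rfl⟩
      refine ⟨fun h => ?_, i, ?_, fun j hj => by simp [e, hj]⟩
      · have := congrFun h i
        simp [e, hε] at this
      · cases b
        · right; simp [e, ε]
        · left; simp [e, ε]
  simp only [hadj]
  rw [← Finset.sum_filter, Finset.filter_mem_eq_inter, Finset.univ_inter,
    Finset.sum_image fun _ _ _ _ h => hinj h, Fintype.sum_prod_type]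
  simp [nbrSum, e, ε, Pi.single_neg, sub_eq_add_neg]

theorem IsQSD.nbrSum_le {d N : ℕ} (hd : 1 ≤ d) (hN : 3 ≤ N) {B : Set (Torus d N)}
    {σ : Torus d N → ℝ} (h : IsQSD d N B σ) {x : Torus d N} (hx : x ∉ B) :
    nbrSum σ x ≤ 2 * d * σ x := by
  have : NeZero N := ⟨by omega⟩
  obtain ⟨h0, hB, hsum, l, hl, -⟩ := h
  have hd' : (0 : ℝ) < d := by exact_mod_cast hd
  have hmul : ∀ y, killedMul d N B σ y = nbrSum σ y / (2 * d) := fun y => by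
    rw [killedMul, finsum_eq_sum_of_fintype, ← sum_adj_eq_nbrSum hN, Finset.sum_div]
    refine Finset.sum_congr rfl fun z _ => ?_
    by_cases hz : z ∈ B
    · simp [hz, hB z hz]
    · by_cases ha : adj y z <;> simp [hz, ha]
  have heq : ∀ y, y ∉ B → nbrSum σ y = 2 * d * (l * σ y) := fun y hy => by
    rw [← hl y hy, hmul]
    field_simp
  obtain ⟨y, hy⟩ := Finite.exists_max σ
  have hypos : 0 < σ y := by
    by_contra! hle
    have : ∀ z, σ z = 0 := fun z => le_antisymm ((hy z).trans hle) (h0 z)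
    simp [this] at hsum
  have hyB : y ∉ B := fun hmem => hypos.ne' (hB y hmem)
  have hl1 : l ≤ 1 := by
    have h1 : nbrSum σ y ≤ 2 * d * σ y := by
      calc nbrSum σ y ≤ ∑ _j : Fin d, (σ y + σ y) :=
            Finset.sum_le_sum fun j _ => add_le_add (hy _) (hy _)
        _ = 2 * d * σ y := by simp; ring
    rw [heq y hyB] at h1
    have h2 : l * σ y ≤ 1 * σ y := by
      rw [one_mul]
      exact le_of_mul_le_mul_left h1 (by positivity)
    exact le_of_mul_le_mul_right h2 hypos
  rw [heq x hx]
  exact mul_le_mul_of_nonneg_left (mul_le_of_le_one_left (h0 x) hl1) (by positivity)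

theorem sum_mul_nbrSum_comm {d N : ℕ} [NeZero N] (f g : Torus d N → ℝ) :
    ∑ x, f x * nbrSum g x = ∑ x, g x * nbrSum f x := by
  have hshift : ∀ (f g : Torus d N → ℝ) (v : Torus d N),
      ∑ x, f x * g (x + v) = ∑ x, g x * f (x - v) := fun f g v =>
    Fintype.sum_equiv (Equiv.addRight v) _ _ fun x => by simp [mul_comm]
  simp only [nbrSum, Finset.mul_sum]
  refine Finset.sum_comm.trans (Eq.trans ?_ Finset.sum_comm)
  refine Finset.sum_congr rfl fun j _ => ?_
  simp only [mul_add]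
  rw [Finset.sum_add_distrib, Finset.sum_add_distrib, hshift f g, ← hshift g f, add_comm]

theorem nbrSum_comp_apply {d N : ℕ} (G : ZMod N → ℝ) (i : Fin d) (x : Torus d N) :
    nbrSum (fun y => G (y i)) x =
      2 * d * G (x i) + (G (x i + 1) + G (x i - 1) - 2 * G (x i)) := by
  have h : ∀ j, G ((x + Pi.single j 1 : Torus d N) i) + G ((x - Pi.single j 1 : Torus d N) i) =
      2 * G (x i) + if j = i then G (x i + 1) + G (x i - 1) - 2 * G (x i) else 0 := fun j => by
    by_cases hj : j = i
    · subst hj; simp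
    · have hj' : i ≠ j := fun h => hj h.symm
      simp [hj, hj']; ring
  simp only [nbrSum, h, Finset.sum_add_distrib]
  simp
  ring

/-- The coordinate `t` lies strictly between the two faces at distance `a` from `0`. -/
def InSlab {N : ℕ} (a : ℕ) (t : ZMod N) : Prop := a < t.val ∧ t.val + a < N

/-- The coordinate `t` lies in the middle two thirds of the slab. -/
def InCore {N : ℕ} (a : ℕ) (t : ZMod N) : Prop :=
  N < 6 * t.val - 4 * (a : ℤ) ∧ 6 * t.val + 4 * (a : ℤ) < 5 * (N : ℤ)

def slabTest {N : ℕ} (a : ℕ) (t : ZMod N) : ℝ :=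
  if InSlab a t then ((t.val : ℝ) - a) ^ 2 * (N - a - t.val) ^ 2 else 0

theorem slabTest_nonneg {N : ℕ} (a : ℕ) (t : ZMod N) : 0 ≤ slabTest a t := by
  rw [slabTest]
  split_ifs <;> positivity

theorem slabTest_eq {N : ℕ} {a : ℕ} {t : ZMod N} (h1 : a ≤ t.val) (h2 : t.val + a ≤ N) :
    slabTest a t = ((t.val : ℝ) - a) ^ 2 * (N - a - t.val) ^ 2 := by
  rw [slabTest]
  split_ifs with h
  · rfl
  · rcases h1.eq_or_lt with h1 | h1
    · simp [h1]
    · have : t.val + a = N := by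
        by_contra hne
        exact h ⟨h1, by omega⟩
      have : (t.val : ℝ) + a = N := by exact_mod_cast this
      rw [← this]
      ring

theorem slabTest_second_difference {N : ℕ} {a : ℕ} (ha : 1 ≤ a) (t : ZMod N) :
    ((N : ℝ) - 2 * a) ^ 2 * ((if InSlab a t then 1 else 0) - 4 * if InCore a t then 1 else 0) ≤
      3 * (slabTest a (t + 1) + slabTest a (t - 1) - 2 * slabTest a t) := by
  by_cases ht : InSlab a t
  · obtain ⟨h1, h2⟩ := ht
    have : NeZero N := ⟨by omega⟩
    have : Fact (1 < N) := ⟨by omega⟩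
    have hadd : (t + 1).val = t.val + 1 := by
      rw [ZMod.val_add_of_lt] <;> rw [ZMod.val_one]
      omega
    have hsub : (t - 1).val = t.val - 1 := by
      rw [ZMod.val_sub] <;> rw [ZMod.val_one]
      omega
    rw [slabTest_eq (t := t + 1) (by omega) (by omega), slabTest_eq (t := t - 1) (by omega)
      (by omega), slabTest_eq (t := t) (by omega) (by omega), hadd, hsub,
      Nat.cast_sub (by omega)]
    have h1' : (a : ℝ) < t.val := by exact_mod_cast h1
    have h2' : (t.val : ℝ) + a < N := by exact_mod_cast h2
    have hin : InSlab a t := ⟨h1, h2⟩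
    push_cast
    obtain ⟨s, hs⟩ : ∃ s : ℝ, s = t.val - a := ⟨_, rfl⟩
    obtain ⟨n, hn⟩ : ∃ n : ℝ, n = N - 2 * a := ⟨_, rfl⟩
    have hkey : ((t.val : ℝ) + 1 - a) ^ 2 * (N - a - (t.val + 1)) ^ 2 +
        (t.val - 1 - a) ^ 2 * (N - a - (t.val - 1)) ^ 2 -
        2 * ((t.val - a) ^ 2 * (N - a - t.val) ^ 2) = 2 * (n ^ 2 - 6 * n * s + 6 * s ^ 2 + 1) := by
      rw [hs, hn]; ring
    rw [hkey, ← hn, if_pos hin]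
    have hs0 : 0 < s := by linarith
    have hsn : s < n := by linarith
    split_ifs with hc
    · nlinarith [sq_nonneg (n - 2 * s)]
    · rw [InCore, not_and_or, not_lt, not_lt] at hc
      rcases hc with hc | hc
      · have hc' : 6 * (t.val : ℝ) - 4 * a ≤ N := by exact_mod_cast hc
        have : 6 * s ≤ n := by rw [hs, hn]; linarith
        nlinarith
      · have hc' : 5 * (N : ℝ) ≤ 6 * t.val + 4 * a := by exact_mod_cast hc
        have : 5 * n ≤ 6 * s := by rw [hs, hn]; linarith
        nlinarith
  · have h0 : slabTest a t = 0 := if_neg ht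
    have h1 := slabTest_nonneg a (t + 1)
    have h2 := slabTest_nonneg a (t - 1)
    rw [h0, if_neg ht]
    refine le_trans (mul_nonpos_of_nonneg_of_nonpos (sq_nonneg _) ?_) (by linarith)
    split_ifs <;> norm_num

theorem exists_inCore_le {d N a : ℕ} (hd : 1 ≤ d) (ha : 1 ≤ a) (haN : 2 * a < N)
    {σ : Torus d N → ℝ} (h0 : ∀ x, 0 ≤ σ x) (hsum : ∑ᶠ x, σ x = 1)
    (hsupp : ∀ x, σ x ≠ 0 → ∃ i, InSlab a (x i))
    (hσ : ∀ x i, InSlab a (x i) → nbrSum σ x ≤ 2 * d * σ x) :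
    ∃ y i, InCore a (y i) ∧ 1 / (4 * d * (N : ℝ) ^ d) ≤ σ y := by
  have : NeZero N := ⟨by omega⟩
  have hd' : (0 : ℝ) < d := by exact_mod_cast hd
  have hN' : (0 : ℝ) < N := by exact_mod_cast (by omega : 0 < N)
  have haN' : 2 * (a : ℝ) < N := by exact_mod_cast haN
  rw [finsum_eq_sum_of_fintype] at hsum
  obtain ⟨i, hi⟩ : ∃ i : Fin d, 1 / (d : ℝ) ≤ ∑ x, σ x * if InSlab a (x i) then 1 else 0 := by
    by_contra! hlt
    have : Nonempty (Fin d) := ⟨⟨0, hd⟩⟩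
    have h1 := Finset.sum_lt_sum_of_nonempty (s := Finset.univ) Finset.univ_nonempty
      fun i _ => hlt i
    rw [Finset.sum_comm, Finset.sum_const, Finset.card_univ, Fintype.card_fin, nsmul_eq_mul,
      mul_one_div_cancel hd'.ne'] at h1
    refine absurd h1 (not_lt.mpr (hsum.symm.le.trans (Finset.sum_le_sum fun x _ => ?_)))
    by_cases hx : σ x = 0
    · simp [hx]
    · obtain ⟨i, hi⟩ := hsupp x hx
      have h2 := Finset.single_le_sum (f := fun i => σ x * if InSlab a (x i) then 1 else 0)
        (fun i _ => mul_nonneg (h0 x) (by split_ifs <;> norm_num)) (Finset.mem_univ i)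
      simpa [hi] using h2
  have hle : ∑ x, slabTest a (x i) * nbrSum σ x ≤ ∑ x, slabTest a (x i) * (2 * d * σ x) := by
    refine Finset.sum_le_sum fun x _ => ?_
    by_cases hx : InSlab a (x i)
    · exact mul_le_mul_of_nonneg_left (hσ x i hx) (slabTest_nonneg _ _)
    · simp [slabTest, hx]
  rw [sum_mul_nbrSum_comm (fun x => slabTest a (x i))] at hle
  have hdiff : ∑ x, σ x * (slabTest a (x i + 1) + slabTest a (x i - 1) - 2 * slabTest a (x i)) ≤
      0 := by
    rw [← sub_nonpos, ← Finset.sum_sub_distrib] at hle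
    refine le_trans (le_of_eq (Finset.sum_congr rfl fun x _ => ?_)) hle
    rw [nbrSum_comp_apply]
    ring
  have hmass : ∑ x, σ x * (if InSlab a (x i) then 1 else 0) ≤
      4 * ∑ x, σ x * (if InCore a (x i) then 1 else 0) := by
    have h1 : ((N : ℝ) - 2 * a) ^ 2 * (∑ x, σ x * (if InSlab a (x i) then 1 else 0) -
        4 * ∑ x, σ x * (if InCore a (x i) then 1 else 0)) ≤ 3 * 0 := by
      refine le_trans ?_ (mul_le_mul_of_nonneg_left hdiff (by norm_num))
      rw [Finset.mul_sum, ← Finset.sum_sub_distrib, Finset.mul_sum, Finset.mul_sum]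
      refine Finset.sum_le_sum fun x _ => ?_
      have := mul_le_mul_of_nonneg_left (slabTest_second_difference ha (x i)) (h0 x)
      linarith
    have h2 : 0 < ((N : ℝ) - 2 * a) ^ 2 := by
      have : 0 < (N : ℝ) - 2 * a := by linarith
      positivity
    nlinarith
  by_contra! hlt
  have hcore : ∑ x, σ x * (if InCore a (x i) then 1 else 0) <
      ∑ _x : Torus d N, 1 / (4 * d * (N : ℝ) ^ d) := by
    refine Finset.sum_lt_sum_of_nonempty Finset.univ_nonempty fun x _ => ?_
    by_cases hx : InCore a (x i)
    · simpa [hx] using hlt x i hx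
    · simp only [hx, if_false, mul_zero]
      positivity
  rw [Finset.sum_const, Finset.card_univ, Fintype.card_fun, ZMod.card, Fintype.card_fin,
    nsmul_eq_mul, Nat.cast_pow] at hcore
  have h1 : (N : ℝ) ^ d * (1 / (4 * d * (N : ℝ) ^ d)) = 1 / d / 4 := by
    field_simp
  linarith

theorem notMem_torusBall_zero_iff {d N : ℕ} [NeZero N] {r : ℝ} (hr : 0 ≤ r) (x : Torus d N) :
    x ∉ torusBall (0 : Torus d N) r ↔ ∃ i, InSlab ⌊r⌋₊ (x i) := by
  have h1 : x ∉ torusBall (0 : Torus d N) r ↔ ⌊r⌋₊ < torusDist 0 x := by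
    rw [Nat.floor_lt hr, ← not_le]
    rfl
  rw [h1, torusDist, Finset.lt_sup_iff]
  simp only [Finset.mem_univ, true_and, Pi.zero_apply, zero_sub, sub_zero, lt_min_iff, InSlab]
  refine exists_congr fun i => ?_
  have h2 := ZMod.val_lt (x i)
  rw [ZMod.neg_val]
  split_ifs with h
  · simp [h]
  · omega

theorem val_intCast_of_mem {N : ℕ} {z : ℤ} (h0 : 0 ≤ z) (h1 : z < N) :
    (((z : ZMod N).val : ℕ) : ℤ) = z := by
  have : NeZero N := ⟨by omega⟩
  rw [ZMod.val_intCast, Int.emod_eq_of_lt h0 h1]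

theorem nbrSum_intCast {d N : ℕ} (σ : Torus d N → ℝ) (z : Lat d) :
    nbrSum (fun w : Lat d => σ fun k => (w k : ZMod N)) z = nbrSum σ fun k => (z k : ZMod N) := by
  have h : ∀ j : Fin d, (fun k => (((Pi.single j 1 : Lat d) k : ℤ) : ZMod N)) = Pi.single j 1 :=
    fun j => funext fun k => by
      by_cases hk : k = j
      · subst hk; simp
      · simp [hk]
  refine Finset.sum_congr rfl fun j _ => ?_
  refine congrArg₂ (· + ·) (congrArg σ ?_) (congrArg σ ?_) <;> rw [← h j] <;> funext k <;> simp

theorem eventually_eight_mul_floor_le {ε : ℝ} (hε : 0 < ε) :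
    ∃ N₀ : ℕ, ∀ N : ℕ, N₀ ≤ N → 8 * ⌊(N : ℝ) ^ (1 - ε / 2)⌋₊ ≤ N := by
  have h := ((tendsto_rpow_atTop (by linarith : 0 < ε / 2)).comp
    tendsto_natCast_atTop_atTop).eventually_ge_atTop (8 : ℝ)
  obtain ⟨N₀, hN₀⟩ := eventually_atTop.mp (h.and (eventually_ge_atTop 1))
  refine ⟨N₀, fun N hN => ?_⟩
  obtain ⟨h1, h2⟩ := hN₀ N hN
  have hN0 : (0 : ℝ) < N := by exact_mod_cast h2
  have h3 : (N : ℝ) ^ (1 - ε / 2) * (N : ℝ) ^ (ε / 2) = N := by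
    rw [← Real.rpow_add hN0, sub_add_cancel, Real.rpow_one]
  have h4 := Nat.floor_le (Real.rpow_nonneg hN0.le (1 - ε / 2))
  have h5 := Real.rpow_nonneg hN0.le (1 - ε / 2)
  have h6 : (8 : ℝ) * ⌊(N : ℝ) ^ (1 - ε / 2)⌋₊ ≤ N := by
    simp only [Function.comp_apply] at h1
    nlinarith
  exact_mod_cast h6

/-- **Lemma (lower bound for the quasistationary distribution).**
With `B = B(0, N^{1−ε/2})`, for all large `N`:
`inf_{x ∉ B} σ(x) ≥ c N^{−2d}`. -/
theorem qsd_lower_bound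
    (d : ℕ) (hd : 3 ≤ d) (ε : ℝ) (hε : 0 < ε ∧ ε < 1) :
    ∃ c : ℝ, 0 < c ∧ ∃ N₀ : ℕ, ∀ N : ℕ, N₀ ≤ N →
      ∀ σ : Torus d N → ℝ,
        IsQSD d N (torusBall (0 : Torus d N) ((N : ℝ) ^ (1 - ε / 2))) σ →
        ∀ x : Torus d N, x ∉ torusBall (0 : Torus d N) ((N : ℝ) ^ (1 - ε / 2)) →
          c * (N : ℝ) ^ (-(2 * (d : ℝ))) ≤ σ x := by
  obtain ⟨c, hc, N₁, -, hlat⟩ := lattice_lower_bound hd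
  obtain ⟨N₂, hN₂⟩ := eventually_eight_mul_floor_le hε.1
  refine ⟨c / (4 * d), by positivity, max (max N₁ N₂) 3, fun N hN σ hσ x hx => ?_⟩
  have hN3 : 3 ≤ N := le_trans (le_max_right _ _) hN
  have : NeZero N := ⟨by omega⟩
  have hN0 : (1 : ℝ) ≤ N := by exact_mod_cast (by omega : 1 ≤ N)
  have hd0 : (0 : ℝ) < d := by exact_mod_cast (by omega : 0 < d)
  have hr := Real.one_le_rpow hN0 (by linarith [hε.2] : 0 ≤ 1 - ε / 2)
  have haN := hN₂ N (le_trans (le_trans (le_max_right _ _) (le_max_left _ _)) hN)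
  have hball := notMem_torusBall_zero_iff (d := d) (N := N) (zero_le_one.trans hr)
  have ha : 1 ≤ ⌊(N : ℝ) ^ (1 - ε / 2)⌋₊ := Nat.one_le_floor_iff _ |>.mpr hr
  generalize ⌊(N : ℝ) ^ (1 - ε / 2)⌋₊ = a at haN hball ha
  have hsuper : ∀ z i, InSlab a (z i) → nbrSum σ z ≤ 2 * d * σ z := fun z i hz =>
    hσ.nbrSum_le (by omega) hN3 ((hball z).mpr ⟨i, hz⟩)
  obtain ⟨y, i, hyi, hy⟩ := exists_inCore_le (by omega) ha (by omega) hσ.1 hσ.2.2.1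
    (fun z hz => (hball z).mp fun hmem => hz (hσ.2.1 z hmem)) hsuper
  obtain ⟨j, hj⟩ := (hball x).mp hx
  have hcast : ∀ z : Torus d N, (fun k => (((z k).val : ℤ) : ZMod N)) = z := fun z =>
    funext fun k => by simp
  have hrange : ∀ (z : Torus d N) (k : Fin d), (0 : ℤ) ≤ (z k).val ∧ ((z k).val : ℤ) ≤ N :=
    fun z k => ⟨by positivity, by exact_mod_cast (ZMod.val_lt (z k)).le⟩
  have hmain := hlat N (le_trans (le_trans (le_max_left _ _) (le_max_left _ _)) hN) a
    (by positivity) (by exact_mod_cast haN) (fun w => σ fun k => (w k : ZMod N))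
    (fun w => hσ.1 _)
    (fun k w h1 h2 => by
      rw [nbrSum_intCast]
      refine hsuper _ k ?_
      have := val_intCast_of_mem (N := N) (z := w k) (by omega) (by omega)
      exact ⟨by omega, by omega⟩)
    (fun k => (y k).val) i (hrange y) (by have := hyi.1; omega) (by have := hyi.2; omega)
    (fun k => (x k).val) j (hrange x) (by have := hj.1; omega) (by have := hj.2; omega)
  simp only [hcast] at hmain
  refine le_trans ?_ hmain
  have hpow : (N : ℝ) ^ (-(2 * (d : ℝ))) = ((N : ℝ) ^ d)⁻¹ * ((N : ℝ) ^ d)⁻¹ := by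
    rw [Real.rpow_neg (by positivity), ← mul_inv, ← pow_add, ← two_mul, ← Real.rpow_natCast]
    push_cast
    rfl
  calc c / (4 * d) * (N : ℝ) ^ (-(2 * (d : ℝ)))
      = c * (1 / (4 * d * (N : ℝ) ^ d)) / (N : ℝ) ^ d := by
        rw [hpow]
        simp only [div_eq_mul_inv, mul_inv]
        ring
    _ ≤ c * σ y / (N : ℝ) ^ d := by gcongr

end Frag
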